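/- Let 𝒞 : X → 2^𝒫 be a Krylov set-valued map and let ζ_n be one of the functionals ζ_n(P) = ∫₀^∞ e^{−λ_n t} ∫ φ_n(w(t)) P(dw) dt. Then the set-valued map V_{ζ_n}[𝒞] : x ↦ V_{ζ_n}[𝒞(x)] = {P ∈ 𝒞(x) : ζ_n(P) = sup_{Q ∈ 𝒞(x)} ζ_n(Q)} is also a Krylov map. -/

import Mathlib

open MeasureTheory Set
open scoped NNReal

noncomputable section

/-- The space `Ω = C([0,∞) → X)` with the compact-open topology. -/
abbrev IPath (X : Type*) [TopologicalSpace X] : Type _ := C(ℝ≥0, X)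

variable {X : Type*} [TopologicalSpace X]

/-- The shift `θ_s : w(·) ↦ w(s + ·)`. -/
def shift (s : ℝ≥0) (w : IPath X) : IPath X :=
  w.comp ⟨fun t => s + t, by fun_prop⟩

lemma shift_continuous (s : ℝ≥0) : Continuous (shift (X := X) s) :=
  ContinuousMap.continuous_precomp _

/-- The Borel σ-algebra `ℱ` on the path space. -/
instance : MeasurableSpace (IPath X) := borel _
instance : BorelSpace (IPath X) := ⟨rfl⟩

/-- The push-forward `θ_s P` of a probability measure on path space by the shift. -/
def pshift (s : ℝ≥0) (P : ProbabilityMeasure (IPath X)) :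
    ProbabilityMeasure (IPath X) :=
  P.map (f := shift s) (shift_continuous s).measurable.aemeasurable

/-- Convexity of a set of probability measures. -/
def ConvexMeasSet {Ω' : Type*} [MeasurableSpace Ω']
    (C : Set (ProbabilityMeasure Ω')) : Prop :=
  ∀ P ∈ C, ∀ Q ∈ C, ∀ a b : ℝ≥0, a + b = 1 →
    ∀ R : ProbabilityMeasure Ω',
      (R : Measure Ω') = a • (P : Measure Ω') + b • (Q : Measure Ω') → R ∈ C

/-- `Q f = ∫ f dQ` for a bounded continuous `f` on path space. -/
def intBCF (f : BoundedContinuousFunction (IPath X) ℝ)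
    (Q : ProbabilityMeasure (IPath X)) : ℝ :=
  ∫ w, f w ∂(Q : Measure (IPath X))

/-- The support function `h_x[f] = sup {P f : P ∈ 𝒞 x}`. -/
def hSupp (C : X → Set (ProbabilityMeasure (IPath X))) (x : X)
    (f : BoundedContinuousFunction (IPath X) ℝ) : ℝ :=
  sSup (intBCF f '' C x)

/-- The set `K(P, s, 𝒞) = {Q : Q f ≤ ∫ h_{w(s)}[f] dP, ∀ f ∈ C_b(Ω)}`. -/
def Kset (C : X → Set (ProbabilityMeasure (IPath X)))
    (P : ProbabilityMeasure (IPath X)) (s : ℝ≥0) :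
    Set (ProbabilityMeasure (IPath X)) :=
  {Q | ∀ f : BoundedContinuousFunction (IPath X) ℝ,
    intBCF f Q ≤ ∫ w, hSupp C (w s) f ∂(P : Measure (IPath X))}

/-- The functional `ζ_n(P) = ∫₀^∞ e^{-λ_n t} ∫ φ_n(w(t)) P(dw) dt`. -/
def zetaP (lam : ℝ) (phi : X → ℝ) (P : ProbabilityMeasure (IPath X)) : ℝ :=
  ∫ t in Ioi (0 : ℝ), Real.exp (-lam * t) *
    ∫ w, phi (w (Real.toNNReal t)) ∂(P : Measure (IPath X))

/-- The truncated functional `ζ_n^s(P) = ∫₀^s e^{-λ_n t} ∫ φ_n(w(t)) P(dw) dt`. -/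
def zetaPtrunc (lam : ℝ) (phi : X → ℝ) (s : ℝ≥0)
    (P : ProbabilityMeasure (IPath X)) : ℝ :=
  ∫ t in Ioc (0 : ℝ) (s : ℝ), Real.exp (-lam * t) *
    ∫ w, phi (w (Real.toNNReal t)) ∂(P : Measure (IPath X))

/-- The set `Γ[P, x, s](𝒞) = {Q ∈ 𝒞(x) : θ_s Q ∈ K(P, s, 𝒞), ζ_n^s(Q) ≥ ζ_n^s(P) ∀n}`. -/
def GammaSet (C : X → Set (ProbabilityMeasure (IPath X)))
    (lam : ℕ → ℝ) (phi : ℕ → X → ℝ)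
    (P : ProbabilityMeasure (IPath X)) (x : X) (s : ℝ≥0) :
    Set (ProbabilityMeasure (IPath X)) :=
  {Q | Q ∈ C x ∧ pshift s Q ∈ Kset C P s ∧
    ∀ n, zetaPtrunc (lam n) (phi n) s P ≤ zetaPtrunc (lam n) (phi n) s Q}

/-- A **Krylov set-valued map**: nonempty compact convex values (C1), measurable (C2),
`P(Ω_x) = 1` for `P ∈ 𝒞(x)` (C3), `θ_s P ∈ K(P, s, 𝒞)` (KP1), and
`θ_s(Γ[P, x, s](𝒞)) = K(P, s, 𝒞)` (KP2), for all `x`, `P ∈ 𝒞(x)`, `s > 0`. -/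
def IsKrylov {X : Type*} [TopologicalSpace X] [MeasurableSpace X]
    (C : X → Set (ProbabilityMeasure (IPath X)))
    (lam : ℕ → ℝ) (phi : ℕ → X → ℝ) : Prop :=
  (∀ x, (C x).Nonempty ∧ IsCompact (C x) ∧ ConvexMeasSet (C x)) ∧
  (∀ K : Set (ProbabilityMeasure (IPath X)), IsClosed K →
    MeasurableSet {x | (C x ∩ K).Nonempty}) ∧
  (∀ x, ∀ P ∈ C x, (P : Measure (IPath X)) {w : IPath X | w 0 = x} = 1) ∧
  (∀ x, ∀ P ∈ C x, ∀ s : ℝ≥0, 0 < s → pshift s P ∈ Kset C P s) ∧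
  (∀ x, ∀ P ∈ C x, ∀ s : ℝ≥0, 0 < s →
    pshift s '' GammaSet C lam phi P x s = Kset C P s)

/-- The set `V_η[K]` of maximizers of `η` over `K`. -/
def Vmax {α : Type*} (η : α → ℝ) (K : Set α) : Set α :=
  {P ∈ K | ∀ Q ∈ K, η Q ≤ η P}

/-- The properties of the data `(λ_n, φ_n)`: an enumeration of `Λ × Φ` where
`Λ ⊆ (0,∞)` is dense in `(0,∞)` and `Φ` is a countable family of bounded continuous
functions on `X` that strongly separates points and is closed under multiplication. -/
def GoodData {X : Type*} [TopologicalSpace X] (lam : ℕ → ℝ) (phi : ℕ → X → ℝ) : Prop :=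
  (∀ n, 0 < lam n) ∧
  (Ioi (0 : ℝ) ⊆ closure (range lam)) ∧
  (∀ n, Continuous (phi n)) ∧
  (∀ n, ∃ M, ∀ y, |phi n y| ≤ M) ∧
  (∀ x : X, ∀ V ∈ nhds x, ∃ n, ∃ ε > 0, ∀ y ∉ V, ε ≤ |phi n x - phi n y|) ∧
  (∀ m n, ∃ k, phi k = fun y => phi m y * phi n y) ∧
  (∀ m n, ∃ k, lam k = lam m ∧ phi k = phi n)

section Abstract

variable {E : Type*} [TopologicalSpace E]

lemma vm_nonempty {η : E → ℝ} (hη : Continuous η) {K : Set E} (hK : IsCompact K)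
    (hne : K.Nonempty) : (Vmax η K).Nonempty := by
  obtain ⟨P, hP, hm⟩ := hK.exists_isMaxOn hne hη.continuousOn
  exact ⟨P, hP, fun Q hQ => hm hQ⟩

lemma vm_compact {η : E → ℝ} (hη : Continuous η) {K : Set E} (hK : IsCompact K) :
    IsCompact (Vmax η K) := by
  have : Vmax η K = K ∩ ⋂ Q ∈ K, {P | η Q ≤ η P} := by
    ext P; simp [Vmax]
  rw [this]
  exact hK.inter_right (isClosed_biInter fun Q _ => isClosed_le continuous_const hη)

lemma vm_meas {Y : Type*} [MeasurableSpace Y] {η : E → ℝ} (hη : Continuous η)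
    {C : Y → Set E} (hne : ∀ x, (C x).Nonempty) (hc : ∀ x, IsCompact (C x))
    (hm : ∀ K : Set E, IsClosed K → MeasurableSet {x | (C x ∩ K).Nonempty})
    (K : Set E) (hK : IsClosed K) :
    MeasurableSet {x | (Vmax η (C x) ∩ K).Nonempty} := by
  have hcl : ∀ q : ℚ, IsClosed {P | (q : ℝ) ≤ η P} := fun q =>
    isClosed_le continuous_const hη
  have key : {x | (Vmax η (C x) ∩ K).Nonempty}ᶜ =
      ⋃ q : ℚ, ({x | (C x ∩ {P | (q : ℝ) ≤ η P}).Nonempty} \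
        {x | (C x ∩ ({P | (q : ℝ) ≤ η P} ∩ K)).Nonempty}) := by
    ext x
    simp only [mem_compl_iff, mem_ofPred_eq, mem_iUnion, mem_sdiff]
    constructor
    · intro h
      obtain ⟨P, hP, hPm⟩ := vm_nonempty hη (hc x) (hne x)
      by_cases hCK : (C x ∩ K).Nonempty
      · obtain ⟨R, ⟨hR, hRK⟩, hRm⟩ :=
          ((hc x).inter_right hK).exists_isMaxOn hCK hη.continuousOn
        have hlt : η R < η P := by
          by_contra hcon
          push Not at hcon
          exact h ⟨R, ⟨hR, fun Q hQ => (hPm Q hQ).trans hcon⟩, hRK⟩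
        obtain ⟨q, hq1, hq2⟩ := exists_rat_btwn hlt
        refine ⟨q, ⟨P, hP, hq2.le⟩, ?_⟩
        rintro ⟨S, hS, hqS, hSK⟩
        have : η S ≤ η R := hRm ⟨hS, hSK⟩
        have h2 : (q : ℝ) ≤ η S := hqS
        linarith
      · obtain ⟨q, hq⟩ := exists_rat_lt (η P)
        refine ⟨q, ⟨P, hP, hq.le⟩, ?_⟩
        rintro ⟨S, hS, hqS, hSK⟩
        exact hCK ⟨S, hS, hSK⟩
    · rintro ⟨q, ⟨P, hP, hqP⟩, hn⟩ ⟨R, ⟨hR, hRm⟩, hRK⟩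
      exact hn ⟨R, hR, le_trans hqP (hRm P hP), hRK⟩
  rw [← MeasurableSet.compl_iff, key]
  exact MeasurableSet.iUnion fun q => (hm _ (hcl q)).diff (hm _ ((hcl q).inter hK))

def iterV {Y : Type*} (ψ : ℕ → E → ℝ) (C : Y → Set E) : ℕ → Y → Set E
  | 0 => C
  | k + 1 => fun x => Vmax (ψ k) (iterV ψ C k x)

lemma exists_selection [T2Space E] {Y : Type*} [MeasurableSpace Y]
    {C : Y → Set E} (hne : ∀ x, (C x).Nonempty) (hc : ∀ x, IsCompact (C x))
    (hm : ∀ K : Set E, IsClosed K → MeasurableSet {x | (C x ∩ K).Nonempty})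
    (ψ : ℕ → E → ℝ) (hψ : ∀ k, Continuous (ψ k))
    (hsep : ∀ P Q, (∀ k, ψ k P = ψ k Q) → P = Q) :
    ∃ q : Y → E, (∀ x, q x ∈ C x) ∧ ∀ K, IsClosed K → MeasurableSet {x | q x ∈ K} := by
  have h : ∀ k, (∀ x, (iterV ψ C k x).Nonempty) ∧ (∀ x, IsCompact (iterV ψ C k x)) ∧
      (∀ K : Set E, IsClosed K → MeasurableSet {x | (iterV ψ C k x ∩ K).Nonempty}) := by
    intro k
    induction k with
    | zero => exact ⟨hne, hc, hm⟩
    | succ k ih =>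
      exact ⟨fun x => vm_nonempty (hψ k) (ih.2.1 x) (ih.1 x),
        fun x => vm_compact (hψ k) (ih.2.1 x),
        fun K hK => vm_meas (hψ k) ih.1 ih.2.1 ih.2.2 K hK⟩
  have hsub : ∀ k x, iterV ψ C (k+1) x ⊆ iterV ψ C k x := fun k x P hP => hP.1
  have hanti : ∀ x, Antitone fun k => iterV ψ C k x := fun x =>
    antitone_nat_of_succ_le fun k => hsub k x
  have hint : ∀ x K, IsClosed K → (∀ k, (iterV ψ C k x ∩ K).Nonempty) →
      (⋂ k, (iterV ψ C k x ∩ K)).Nonempty := by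
    intro x K hK hn
    refine IsCompact.nonempty_iInter_of_sequence_nonempty_isCompact_isClosed _
      (fun k => inter_subset_inter_left _ (hsub k x)) hn
      (((h 0).2.1 x).inter_right hK) (fun k => (((h k).2.1 x).inter_right hK).isClosed)
  have hex : ∀ x, ∃ P, ∀ k, P ∈ iterV ψ C k x := by
    intro x
    obtain ⟨P, hP⟩ := hint x univ isClosed_univ (fun k => by simpa using (h k).1 x)
    exact ⟨P, fun k => (mem_iInter.1 hP k).1⟩
  choose q hq using hex
  refine ⟨q, fun x => hq x 0, fun K hK => ?_⟩
  have huniq : ∀ x P, (∀ k, P ∈ iterV ψ C k x) → P = q x := by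
    intro x P hP
    apply hsep
    intro k
    exact le_antisymm ((hq x (k+1)).2 _ (hP k)) ((hP (k+1)).2 _ (hq x k))
  have : {x | q x ∈ K} = ⋂ k, {x | (iterV ψ C k x ∩ K).Nonempty} := by
    ext x
    simp only [mem_ofPred_eq, mem_iInter]
    constructor
    · intro hx k
      exact ⟨q x, hq x k, hx⟩
    · intro hx
      obtain ⟨P, hP⟩ := hint x K hK hx
      rw [mem_iInter] at hP
      rw [← huniq x P (fun k => (hP k).1)]
      exact (hP 0).2
  rw [this]
  exact MeasurableSet.iInter fun k => (h k).2.2 K hK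

end Abstract

section Sep

set_option linter.unusedSectionVars false

variable {W : Type*} [TopologicalSpace W] [SecondCountableTopology W]
  [TopologicalSpace.MetrizableSpace W] [MeasurableSpace W] [BorelSpace W]

lemma cont_testNN (f : BoundedContinuousFunction W ℝ≥0) :
    Continuous fun P : ProbabilityMeasure W => ((P.toFiniteMeasure.testAgainstNN f : ℝ≥0) : ℝ) :=
  NNReal.continuous_coe.comp
    (ProbabilityMeasure.continuous_testAgainstNN_eval f)

lemma exists_sep : ∃ ψ : ℕ → ProbabilityMeasure W → ℝ, (∀ k, Continuous (ψ k)) ∧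
    ∀ P Q, (∀ k, ψ k P = ψ k Q) → P = Q := by
  classical
  obtain ⟨B, hBc, -, hB⟩ := TopologicalSpace.exists_countable_basis W
  have : Countable B := hBc.to_subtype
  let G : Finset B → Set W := fun T => ⋂ U ∈ T, (U : Set W)ᶜ
  have hG : ∀ T, IsClosed (G T) := fun T => isClosed_biInter fun U _ =>
    (hB.isOpen U.2).isClosed_compl
  have hGs : ∀ U : B, G {U} = (U : Set W)ᶜ := by
    intro U
    ext x
    simp only [G, mem_iInter, Finset.mem_singleton]
    constructor
    · intro h; exact h U rfl
    · rintro h V rfl; exact h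
  obtain ⟨e, he⟩ := exists_surjective_nat (Finset B × ℕ)
  refine ⟨fun k P => P.toFiniteMeasure.testAgainstNN ((hG (e k).1).apprSeq (e k).2),
    fun k => cont_testNN _, fun P Q hPQ => ?_⟩
  have h1 : ∀ T m, ∫⁻ x, (hG T).apprSeq m x ∂(P : Measure W) =
      ∫⁻ x, (hG T).apprSeq m x ∂(Q : Measure W) := by
    intro T m
    obtain ⟨k, hk⟩ := he (T, m)
    have := hPQ k
    beta_reduce at this
    rw [hk] at this
    have h2 := NNReal.coe_injective this
    have h3 := congrArg (fun x : ℝ≥0 => (x : ENNReal)) h2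
    simpa [FiniteMeasure.testAgainstNN_coe_eq] using h3
  have h2 : ∀ T, (P : Measure W) (G T) = (Q : Measure W) (G T) := by
    intro T
    refine tendsto_nhds_unique (HasOuterApproxClosed.tendsto_lintegral_apprSeq (hG T) (P : Measure W)) ?_
    simp_rw [h1]
    exact HasOuterApproxClosed.tendsto_lintegral_apprSeq (hG T) (Q : Measure W)
  have hgen : (inferInstance : MeasurableSpace W) = MeasurableSpace.generateFrom (range G) := by
    apply le_antisymm
    · rw [BorelSpace.measurable_eq (α := W),
        hB.borel_eq_generateFrom]
      apply MeasurableSpace.generateFrom_le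
      intro U hU
      have : MeasurableSet[MeasurableSpace.generateFrom (range G)] Uᶜ :=
        MeasurableSpace.measurableSet_generateFrom ⟨{⟨U, hU⟩}, hGs ⟨U, hU⟩⟩
      simpa using this.compl
    · apply MeasurableSpace.generateFrom_le
      rintro _ ⟨T, rfl⟩
      exact (hG T).measurableSet
  refine Subtype.ext (ext_of_generate_finite (μ := (P : Measure W)) (ν := (Q : Measure W)) _ hgen ?_ ?_ (by simp))
  · rintro _ ⟨T, rfl⟩ _ ⟨T', rfl⟩ -
    refine ⟨T ∪ T', ?_⟩
    ext x
    simp only [G, mem_iInter, mem_inter_iff, Finset.mem_union]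
    constructor
    · intro h; exact ⟨fun U hU => h U (Or.inl hU), fun U hU => h U (Or.inr hU)⟩
    · rintro ⟨h, h'⟩ U (hU | hU)
      exacts [h U hU, h' U hU]
  · rintro _ ⟨T, rfl⟩
    exact h2 T

lemma sel_measurable {Y : Type*} [MeasurableSpace Y] (q : Y → ProbabilityMeasure W)
    (hq : ∀ K, IsClosed K → MeasurableSet {x | q x ∈ K}) :
    Measurable fun x => (q x : Measure W) := by
  have hψ : ∀ ψ : ProbabilityMeasure W → ℝ, Continuous ψ → Measurable fun x => ψ (q x) := by
    intro ψ hψ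
    apply measurable_of_Ici
    intro a
    exact hq (ψ ⁻¹' Ici a) (isClosed_Ici.preimage hψ)
  refine Measurable.measure_of_isPiSystem_of_isProbabilityMeasure (S := {s | IsClosed s}) ?_
    isPiSystem_isClosed ?_
  · rw [BorelSpace.measurable_eq (α := W), borel_eq_generateFrom_isClosed]
  · intro G hG
    refine measurable_of_tendsto_metrizable (f := fun m x => ∫⁻ w, hG.apprSeq m w ∂(q x : Measure W))
      (fun m => ?_)
      (tendsto_pi_nhds.2 fun x => HasOuterApproxClosed.tendsto_lintegral_apprSeq hG (q x : Measure W))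
    have := (hψ _ (cont_testNN (hG.apprSeq m))).ennreal_ofReal
    simpa [FiniteMeasure.testAgainstNN_coe_eq, ENNReal.ofReal_coe_nnreal] using this

end Sep

section PathLemmas

set_option linter.unusedSectionVars false

variable {S : Type*} [TopologicalSpace S] [PolishSpace S] [MeasurableSpace S] [BorelSpace S]

lemma cont_eval_real (phi : S → ℝ) (hc : Continuous phi) :
    Continuous fun p : IPath S × ℝ => phi (p.1 (Real.toNNReal p.2)) := by
  have : Continuous fun p : IPath S × ℝ≥0 => p.1 p.2 := continuous_eval
  exact hc.comp (this.comp (continuous_fst.prodMk (continuous_real_toNNReal.comp continuous_snd)))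

lemma zeta_eq {lam : ℝ} (hlam : 0 < lam) {phi : S → ℝ} (hc : Continuous phi)
    (hb : ∃ M, ∀ y, |phi y| ≤ M) :
    ∃ F : BoundedContinuousFunction (IPath S) ℝ, ∀ P, zetaP lam phi P = intBCF F P := by
  obtain ⟨M, hM⟩ := hb
  have hjc := cont_eval_real phi hc
  have hexp : IntegrableOn (fun t : ℝ => Real.exp (-lam * t)) (Ioi 0) :=
    exp_neg_integrableOn_Ioi 0 hlam
  have hbd : ∀ (w : IPath S) (t : ℝ), ‖Real.exp (-lam * t) * phi (w (Real.toNNReal t))‖ ≤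
      Real.exp (-lam * t) * M := by
    intro w t
    rw [norm_mul, Real.norm_eq_abs, Real.abs_exp, Real.norm_eq_abs]
    exact mul_le_mul_of_nonneg_left (hM _) (Real.exp_pos _).le
  have hcw : ∀ t : ℝ, Continuous fun w : IPath S =>
      Real.exp (-lam * t) * phi (w (Real.toNNReal t)) := fun t =>
    continuous_const.mul (hjc.comp (continuous_id.prodMk continuous_const))
  have hct : ∀ w : IPath S, Continuous fun t : ℝ =>
      Real.exp (-lam * t) * phi (w (Real.toNNReal t)) := fun w =>
    (by fun_prop : Continuous fun t : ℝ => Real.exp (-lam * t)).mul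
      (hjc.comp (continuous_const.prodMk continuous_id))
  let F0 : IPath S → ℝ := fun w => ∫ t in Ioi (0 : ℝ),
    Real.exp (-lam * t) * phi (w (Real.toNNReal t))
  have hF0c : Continuous F0 :=
    continuous_of_dominated (fun w => (hct w).aestronglyMeasurable)
      (fun w => Filter.Eventually.of_forall (hbd w)) (hexp.mul_const M)
      (Filter.Eventually.of_forall hcw)
  have hF0b : ∀ w, ‖F0 w‖ ≤ ∫ t in Ioi (0 : ℝ), Real.exp (-lam * t) * M := fun w =>
    norm_integral_le_of_norm_le (hexp.mul_const M) (Filter.Eventually.of_forall (hbd w))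
  refine ⟨BoundedContinuousFunction.ofNormedAddCommGroup F0 hF0c _ hF0b, fun P => ?_⟩
  change zetaP lam phi P = ∫ w, (∫ t in Ioi (0 : ℝ),
    Real.exp (-lam * t) * phi (w (Real.toNNReal t))) ∂(P : Measure (IPath S))
  have hint : Integrable (Function.uncurry fun (w : IPath S) (t : ℝ) =>
      Real.exp (-lam * t) * phi (w (Real.toNNReal t)))
      ((P : Measure (IPath S)).prod (volume.restrict (Ioi (0:ℝ)))) := by
    have hjc2 : Continuous (Function.uncurry fun (w : IPath S) (t : ℝ) =>
      Real.exp (-lam * t) * phi (w (Real.toNNReal t))) :=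
      (by fun_prop : Continuous fun p : IPath S × ℝ => Real.exp (-lam * p.2)).mul hjc
    refine Integrable.mono' (g := fun p => Real.exp (-lam * p.2) * M) ?_
      hjc2.aestronglyMeasurable
      (Filter.Eventually.of_forall fun p => hbd p.1 p.2)
    exact (hexp.mul_const M : Integrable _ (volume.restrict (Ioi (0:ℝ)))).comp_snd
      (P : Measure (IPath S))
  rw [integral_integral_swap hint]
  unfold zetaP
  simp_rw [integral_const_mul]

lemma zeta_split {lam : ℝ} (hlam : 0 < lam) {phi : S → ℝ} (hc : Continuous phi)
    (hb : ∃ M, ∀ y, |phi y| ≤ M) (s : ℝ≥0) (P : ProbabilityMeasure (IPath S)) :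
    zetaP lam phi P = zetaPtrunc lam phi s P +
      Real.exp (-lam * s) * zetaP lam phi (pshift s P) := by
  obtain ⟨M, hM⟩ := hb
  have hjc := cont_eval_real phi hc
  have hexp : IntegrableOn (fun t : ℝ => Real.exp (-lam * t)) (Ioi 0) :=
    exp_neg_integrableOn_Ioi 0 hlam
  have hgc : Continuous fun t : ℝ => ∫ w, phi (w (Real.toNNReal t)) ∂(P : Measure (IPath S)) := by
    refine continuous_of_dominated (bound := fun _ => M) (fun t => ?_)
      (fun t => Filter.Eventually.of_forall fun w => hM _) (integrable_const M)
      (Filter.Eventually.of_forall fun w => hjc.comp (continuous_const.prodMk continuous_id))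
    exact (hjc.comp (continuous_id.prodMk continuous_const)).aestronglyMeasurable
  have hgb : ∀ t : ℝ, ‖∫ w, phi (w (Real.toNNReal t)) ∂(P : Measure (IPath S))‖ ≤ M := by
    intro t
    have := norm_integral_le_of_norm_le_const (μ := (P : Measure (IPath S)))
      (f := fun w => phi (w (Real.toNNReal t))) (C := M) (Filter.Eventually.of_forall fun w => hM _)
    simpa using this
  have hgi : IntegrableOn (fun t : ℝ => Real.exp (-lam * t) *
      ∫ w, phi (w (Real.toNNReal t)) ∂(P : Measure (IPath S))) (Ioi 0) := by
    refine Integrable.mono' (hexp.mul_const M)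
      ((by fun_prop : Continuous fun t : ℝ => Real.exp (-lam * t)).mul hgc).aestronglyMeasurable
      (Filter.Eventually.of_forall fun t => ?_)
    rw [norm_mul, Real.norm_eq_abs, Real.abs_exp]
    exact mul_le_mul_of_nonneg_left (hgb t) (Real.exp_pos _).le
  have hs : (0:ℝ) ≤ s := s.2
  unfold zetaP zetaPtrunc
  rw [← Ioc_union_Ioi_eq_Ioi hs, setIntegral_union (Ioc_disjoint_Ioi le_rfl) measurableSet_Ioi
    (hgi.mono_set Ioc_subset_Ioi_self) (hgi.mono_set (Ioi_subset_Ioi hs)),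
    Ioc_union_Ioi_eq_Ioi hs]
  congr 1
  have hmp : MeasurePreserving (fun t : ℝ => t + (s:ℝ)) volume volume :=
    measurePreserving_add_right volume (s:ℝ)
  have hpre : (fun t : ℝ => t + (s:ℝ)) ⁻¹' Ioi (s:ℝ) = Ioi 0 := by
    ext t; simp
  rw [← hmp.setIntegral_preimage_emb (measurableEmbedding_addRight (s:ℝ)), hpre,
    ← integral_const_mul]
  refine setIntegral_congr_fun measurableSet_Ioi fun t ht => ?_
  have ht' : (0:ℝ) < t := ht
  have hsh : ∫ w, phi (w (Real.toNNReal t)) ∂(pshift s P : Measure (IPath S)) =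
      ∫ w, phi (w (Real.toNNReal (t + s))) ∂(P : Measure (IPath S)) := by
    have h1 : (pshift s P : Measure (IPath S)) = Measure.map (shift s) (P : Measure (IPath S)) := rfl
    rw [h1, integral_map (f := fun w : IPath S => phi (w (Real.toNNReal t)))
      (shift_continuous s).measurable.aemeasurable
      (hjc.comp (continuous_id.prodMk continuous_const)).aestronglyMeasurable]
    have : Real.toNNReal (t + s) = s + Real.toNNReal t := by
      rw [Real.toNNReal_add ht'.le hs, Real.toNNReal_coe, add_comm]
    rw [this]
    rfl
  rw [hsh, ← mul_assoc, ← Real.exp_add]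
  congr 2
  ring

lemma cont_intBCF (f : BoundedContinuousFunction (IPath S) ℝ) : Continuous (intBCF f) :=
  ProbabilityMeasure.continuous_integral_boundedContinuousFunction f

lemma intBCF_bound (f : BoundedContinuousFunction (IPath S) ℝ) (P) : |intBCF f P| ≤ ‖f‖ := by
  have := norm_integral_le_of_norm_le_const (μ := (P : Measure (IPath S)))
      (f := fun w => f w) (C := ‖f‖) (Filter.Eventually.of_forall fun w => f.norm_coe_le_norm w)
  simpa [intBCF] using this

lemma le_hSupp {C : S → Set (ProbabilityMeasure (IPath S))} {x : S} {P}
    (hP : P ∈ C x) (f : BoundedContinuousFunction (IPath S) ℝ) : intBCF f P ≤ hSupp C x f := by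
  refine le_csSup ⟨‖f‖, ?_⟩ ⟨P, hP, rfl⟩
  rintro _ ⟨Q, -, rfl⟩
  exact (le_abs_self _).trans (intBCF_bound f Q)

lemma hSupp_attained {C : S → Set (ProbabilityMeasure (IPath S))} {x : S}
    (hne : (C x).Nonempty) (hc : IsCompact (C x)) (f : BoundedContinuousFunction (IPath S) ℝ) :
    ∃ P ∈ C x, hSupp C x f = intBCF f P := by
  obtain ⟨P, hP, h⟩ := hc.exists_sSup_image_eq hne (cont_intBCF f).continuousOn
  exact ⟨P, hP, h⟩

lemma hSupp_le {C : S → Set (ProbabilityMeasure (IPath S))} {x : S}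
    (hne : (C x).Nonempty) (f : BoundedContinuousFunction (IPath S) ℝ) {a : ℝ}
    (h : ∀ P ∈ C x, intBCF f P ≤ a) : hSupp C x f ≤ a := by
  apply csSup_le (hne.image _)
  rintro _ ⟨P, hP, rfl⟩
  exact h P hP

lemma hSupp_bound {C : S → Set (ProbabilityMeasure (IPath S))} {x : S}
    (hne : (C x).Nonempty) (hc : IsCompact (C x)) (f : BoundedContinuousFunction (IPath S) ℝ) :
    |hSupp C x f| ≤ ‖f‖ := by
  obtain ⟨P, hP, h⟩ := hSupp_attained hne hc f
  rw [h]; exact intBCF_bound f P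

variable {C : S → Set (ProbabilityMeasure (IPath S))}

lemma hSupp_meas
    (hne : ∀ x, (C x).Nonempty) (hc : ∀ x, IsCompact (C x))
    (hm : ∀ K, IsClosed K → MeasurableSet {x | (C x ∩ K).Nonempty})
    (f : BoundedContinuousFunction (IPath S) ℝ) :
    Measurable fun x => hSupp C x f := by
  apply measurable_of_Ici
  intro a
  have : (fun x => hSupp C x f) ⁻¹' Ici a = {x | (C x ∩ {P | a ≤ intBCF f P}).Nonempty} := by
    ext x
    constructor
    · intro h
      obtain ⟨P, hP, h2⟩ := hSupp_attained (hne x) (hc x) f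
      refine ⟨P, hP, ?_⟩
      have h3 : a ≤ hSupp C x f := h
      rw [h2] at h3; exact h3
    · rintro ⟨P, hP, h⟩
      exact le_trans h (le_hSupp hP f)
  rw [this]
  exact hm _ (isClosed_le continuous_const (cont_intBCF f))

lemma hSupp_meas_path
    (hne : ∀ x, (C x).Nonempty) (hc : ∀ x, IsCompact (C x))
    (hm : ∀ K, IsClosed K → MeasurableSet {x | (C x ∩ K).Nonempty})
    (s : ℝ≥0) (f : BoundedContinuousFunction (IPath S) ℝ) :
    Measurable fun w : IPath S => hSupp C (w s) f :=
  (hSupp_meas hne hc hm f).comp (continuous_eval_const (F := IPath S) s).measurable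

lemma hSupp_int
    (hne : ∀ x, (C x).Nonempty) (hc : ∀ x, IsCompact (C x))
    (hm : ∀ K, IsClosed K → MeasurableSet {x | (C x ∩ K).Nonempty})
    (s : ℝ≥0) (f : BoundedContinuousFunction (IPath S) ℝ)
    (P : ProbabilityMeasure (IPath S)) :
    Integrable (fun w : IPath S => hSupp C (w s) f) (P : Measure (IPath S)) :=
  Integrable.mono' (integrable_const ‖f‖) (hSupp_meas_path hne hc hm s f).aestronglyMeasurable
    (Filter.Eventually.of_forall fun _ => hSupp_bound (hne _) (hc _) f)

lemma exists_opt
    (hne : ∀ x, (C x).Nonempty) (hc : ∀ x, IsCompact (C x))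
    (hm : ∀ K, IsClosed K → MeasurableSet {x | (C x ∩ K).Nonempty})
    (s : ℝ≥0) (F : BoundedContinuousFunction (IPath S) ℝ)
    (P : ProbabilityMeasure (IPath S)) :
    ∃ Q ∈ Kset C P s, ∫ w, hSupp C (w s) F ∂(P : Measure (IPath S)) ≤ intBCF F Q := by
  obtain ⟨ψ, hψ, hsep⟩ := exists_sep (W := IPath S)
  obtain ⟨q, hq, hqm⟩ := exists_selection (C := fun x => Vmax (intBCF F) (C x))
    (fun x => vm_nonempty (cont_intBCF F) (hc x) (hne x))
    (fun x => vm_compact (cont_intBCF F) (hc x))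
    (vm_meas (cont_intBCF F) hne hc hm) ψ hψ hsep
  have hmeas := (sel_measurable q hqm).comp
    (continuous_eval_const (F := IPath S) s).measurable
  let κ : ProbabilityTheory.Kernel (IPath S) (IPath S) := ⟨_, hmeas⟩
  have hκ : ∀ w : IPath S, κ w = (q (w s) : Measure (IPath S)) := fun w => rfl
  have : ProbabilityTheory.IsMarkovKernel κ := ⟨fun w => by rw [hκ]; infer_instance⟩
  let Q : ProbabilityMeasure (IPath S) :=
    ⟨(ProbabilityTheory.Kernel.comp κ
      (ProbabilityTheory.Kernel.const Unit (P : Measure (IPath S)))) (), inferInstance⟩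
  have hQ : ∀ f : BoundedContinuousFunction (IPath S) ℝ,
      intBCF f Q = ∫ w, intBCF f (q (w s)) ∂(P : Measure (IPath S)) := by
    intro f
    have hf : Integrable f (Q : Measure (IPath S)) := f.integrable _
    exact ProbabilityTheory.Kernel.integral_comp (η := κ)
      (κ := ProbabilityTheory.Kernel.const Unit (P : Measure (IPath S))) (a := ()) hf
  have hi : ∀ f : BoundedContinuousFunction (IPath S) ℝ,
      Integrable (fun w : IPath S => intBCF f (q (w s))) (P : Measure (IPath S)) := by
    intro f
    have hf : Integrable f (Q : Measure (IPath S)) := f.integrable _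
    exact Integrable.integral_comp (η := κ)
      (κ := ProbabilityTheory.Kernel.const Unit (P : Measure (IPath S))) (a := ()) (f := f) hf
  refine ⟨Q, fun f => ?_, ?_⟩
  · rw [hQ]
    exact integral_mono (hi f) (hSupp_int hne hc hm s f P) fun w => le_hSupp (hq _).1 f
  · rw [hQ]
    exact integral_mono (hSupp_int hne hc hm s F P) (hi F) fun w =>
      hSupp_le (hne _) F fun R hR => (hq (w s)).2 R hR

end PathLemmas

section Limit

variable {S : Type*} [TopologicalSpace S] [PolishSpace S] [MeasurableSpace S] [BorelSpace S]

set_option linter.unusedSectionVars false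

lemma intBCF_add_smul (f F : BoundedContinuousFunction (IPath S) ℝ) (c : ℝ)
    (P : ProbabilityMeasure (IPath S)) :
    intBCF (f + c • F) P = intBCF f P + c * intBCF F P := by
  unfold intBCF
  have h : ∀ w, (f + c • F) w = f w + c * F w := fun w => rfl
  simp_rw [h]
  rw [integral_add (f.integrable _) ((F.integrable _).const_mul c), integral_const_mul]

lemma hV_eq {C : S → Set (ProbabilityMeasure (IPath S))}
    {F : BoundedContinuousFunction (IPath S) ℝ} {x : S} {P}
    (hP : P ∈ Vmax (intBCF F) (C x)) : intBCF F P = hSupp C x F :=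
  le_antisymm (le_hSupp hP.1 F) (hSupp_le ⟨P, hP.1⟩ F hP.2)

lemma lim_lower {C : S → Set (ProbabilityMeasure (IPath S))} {x : S}
    (hne : (C x).Nonempty) (hc : IsCompact (C x)) (f F : BoundedContinuousFunction (IPath S) ℝ)
    (c : ℝ) :
    hSupp (fun x => Vmax (intBCF F) (C x)) x f ≤ hSupp C x (f + c • F) - c * hSupp C x F := by
  refine hSupp_le (vm_nonempty (cont_intBCF F) hc hne) f fun P hP => ?_
  have h1 := le_hSupp hP.1 (f + c • F)
  rw [intBCF_add_smul, hV_eq hP] at h1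
  linarith

lemma lim_upper {C : S → Set (ProbabilityMeasure (IPath S))} {x : S}
    (hne : (C x).Nonempty) (f F : BoundedContinuousFunction (IPath S) ℝ)
    {c : ℝ} (hc0 : 0 ≤ c) : hSupp C x (f + c • F) - c * hSupp C x F ≤ ‖f‖ := by
  suffices hSupp C x (f + c • F) ≤ ‖f‖ + c * hSupp C x F by linarith
  refine hSupp_le hne _ fun P hP => ?_
  rw [intBCF_add_smul]
  exact add_le_add ((le_abs_self _).trans (intBCF_bound f P))
    (mul_le_mul_of_nonneg_left (le_hSupp hP F) hc0)

lemma lim_tendsto {C : S → Set (ProbabilityMeasure (IPath S))} {x : S}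
    (hne : (C x).Nonempty) (hc : IsCompact (C x)) (f F : BoundedContinuousFunction (IPath S) ℝ) :
    Filter.Tendsto (fun N : ℕ => hSupp C x (f + (N : ℝ) • F) - N * hSupp C x F) Filter.atTop
      (nhds (hSupp (fun x => Vmax (intBCF F) (C x)) x f)) := by
  set v := hSupp (fun x => Vmax (intBCF F) (C x)) x f with hv
  have hlow : ∀ N : ℕ, v ≤ hSupp C x (f + (N : ℝ) • F) - N * hSupp C x F := fun N =>
    lim_lower hne hc f F N
  rw [Metric.tendsto_atTop]
  intro ε hε
  have key : ∃ δ > 0, ∀ P ∈ C x, v + ε / 2 ≤ intBCF f P → intBCF F P ≤ hSupp C x F - δ := by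
    by_cases hK : (C x ∩ {P | v + ε / 2 ≤ intBCF f P}).Nonempty
    · obtain ⟨R, ⟨hR, hRK⟩, hRm⟩ := (hc.inter_right
        (isClosed_le continuous_const (cont_intBCF f))).exists_isMaxOn hK
          (cont_intBCF F).continuousOn
      refine ⟨hSupp C x F - intBCF F R, ?_, fun P hP hPf => ?_⟩
      · have h1 := le_hSupp hR F
        rcases h1.lt_or_eq with h | h
        · linarith
        · exfalso
          have hRV : R ∈ Vmax (intBCF F) (C x) := ⟨hR, fun Q hQ => by rw [h]; exact le_hSupp hQ F⟩
          have h2 : intBCF f R ≤ v :=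
            le_hSupp (C := fun x => Vmax (intBCF F) (C x)) (x := x) hRV f
          have h3 : v + ε / 2 ≤ intBCF f R := hRK
          linarith
      · have : intBCF F P ≤ intBCF F R := hRm ⟨hP, hPf⟩
        linarith
    · exact ⟨1, one_pos, fun P hP hPf => (hK ⟨P, hP, hPf⟩).elim⟩
  obtain ⟨δ, hδ, hkey⟩ := key
  obtain ⟨N0, hN0⟩ := exists_nat_ge ((2 * ‖f‖) / δ)
  refine ⟨N0, fun N hN => ?_⟩
  have hNr : 2 * ‖f‖ ≤ N * δ := by
    rw [div_le_iff₀ hδ] at hN0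
    have : (N0 : ℝ) ≤ N := by exact_mod_cast hN
    nlinarith
  have hvb : |v| ≤ ‖f‖ := hSupp_bound (C := fun x => Vmax (intBCF F) (C x))
    (vm_nonempty (cont_intBCF F) hc hne) (vm_compact (cont_intBCF F) hc) f
  have hup : hSupp C x (f + (N : ℝ) • F) ≤ v + ε / 2 + N * hSupp C x F := by
    refine hSupp_le hne _ fun P hP => ?_
    rw [intBCF_add_smul]
    have hNn : (0 : ℝ) ≤ N := Nat.cast_nonneg N
    by_cases hPf : v + ε / 2 ≤ intBCF f P
    · have h1 := mul_le_mul_of_nonneg_left (hkey P hP hPf) hNn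
      have h2 := (le_abs_self _).trans (intBCF_bound f P)
      have h3 := (neg_abs_le v)
      nlinarith
    · have h1 := mul_le_mul_of_nonneg_left (le_hSupp hP F) hNn
      push Not at hPf
      linarith
  rw [Real.dist_eq, abs_of_nonneg (by linarith [hlow N])]
  linarith

end Limit

/-- **The reduction lemma:** if `𝒞` is a Krylov set-valued map, then so is the map
`x ↦ V_{ζ_n}[𝒞(x)]` of maximizers of any one of the functionals `ζ_n`. -/
theorem Vmax_isKrylov
    {X : Type*} [TopologicalSpace X] [PolishSpace X] [MeasurableSpace X] [BorelSpace X]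
    (lam : ℕ → ℝ) (phi : ℕ → X → ℝ) (hdata : GoodData lam phi)
    (C : X → Set (ProbabilityMeasure (IPath X)))
    (hK : IsKrylov C lam phi) (n : ℕ) :
    IsKrylov (fun x => Vmax (zetaP (lam n) (phi n)) (C x)) lam phi := by
  obtain ⟨h1, h2, h3, h4, h5⟩ := hK
  obtain ⟨d1, -, d3, d4, -⟩ := hdata
  obtain ⟨F, hz⟩ := zeta_eq (d1 n) (d3 n) (d4 n)
  have hzf : zetaP (lam n) (phi n) = intBCF F := funext hz
  have hsplit := zeta_split (d1 n) (d3 n) (d4 n)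
  rw [hzf] at hsplit
  rw [hzf]
  have hne : ∀ x, (C x).Nonempty := fun x => (h1 x).1
  have hc : ∀ x, IsCompact (C x) := fun x => (h1 x).2.1
  have hFc := cont_intBCF F
  have hVne : ∀ x, (Vmax (intBCF F) (C x)).Nonempty := fun x => vm_nonempty hFc (hc x) (hne x)
  have hVc : ∀ x, IsCompact (Vmax (intBCF F) (C x)) := fun x => vm_compact hFc (hc x)
  have hVm := vm_meas hFc hne hc h2
  -- the terminal part of an optimal measure is optimal
  have hB : ∀ x, ∀ P ∈ Vmax (intBCF F) (C x), ∀ s : ℝ≥0, 0 < s →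
      ∫ w, hSupp C (w s) F ∂(P : Measure (IPath X)) ≤ intBCF F (pshift s P) := by
    intro x P hP s hs
    obtain ⟨Q, hQK, hQ⟩ := exists_opt hne hc h2 s F P
    rw [← h5 x P hP.1 s hs] at hQK
    obtain ⟨Q', ⟨hQ'C, -, hQ'z⟩, rfl⟩ := hQK
    have e1 := hsplit s P
    have e2 := hsplit s Q'
    have e3 := hP.2 Q' hQ'C
    have e4 := hQ'z n
    have e5 : Real.exp (-lam n * s) * intBCF F (pshift s Q') ≤
        Real.exp (-lam n * s) * intBCF F (pshift s P) := by linarith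
    exact hQ.trans (le_of_mul_le_mul_left e5 (Real.exp_pos _))
  have hKP1 : ∀ x, ∀ P ∈ Vmax (intBCF F) (C x), ∀ s : ℝ≥0, 0 < s →
      pshift s P ∈ Kset (fun x => Vmax (intBCF F) (C x)) P s := by
    intro x P hP s hs f
    have hlim : Filter.Tendsto (fun N : ℕ => ∫ w, (hSupp C (w s) (f + (N : ℝ) • F) -
        N * hSupp C (w s) F) ∂(P : Measure (IPath X))) Filter.atTop
        (nhds (∫ w, hSupp (fun x => Vmax (intBCF F) (C x)) (w s) f ∂(P : Measure (IPath X)))) := by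
      refine tendsto_integral_of_dominated_convergence (fun _ => ‖f‖) (fun N => ?_)
        (integrable_const _) (fun N => Filter.Eventually.of_forall fun w => ?_)
        (Filter.Eventually.of_forall fun w => lim_tendsto (hne _) (hc _) f F)
      · exact ((hSupp_meas_path hne hc h2 s _).sub
          ((hSupp_meas_path hne hc h2 s F).const_mul _)).aestronglyMeasurable
      · rw [Real.norm_eq_abs, abs_le]
        refine ⟨?_, lim_upper (hne _) f F (Nat.cast_nonneg N)⟩
        exact (abs_le.1 (hSupp_bound (C := fun x => Vmax (intBCF F) (C x))
          (hVne (w s)) (hVc (w s)) f)).1.trans (lim_lower (hne _) (hc _) f F N)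
    refine ge_of_tendsto' hlim fun N => ?_
    rw [integral_sub (hSupp_int hne hc h2 s _ P) ((hSupp_int hne hc h2 s F P).const_mul _),
      integral_const_mul]
    have e1 := h4 x P hP.1 s hs (f + (N : ℝ) • F)
    rw [intBCF_add_smul] at e1
    have e2 := mul_le_mul_of_nonneg_left (hB x P hP s hs) (Nat.cast_nonneg (α := ℝ) N)
    linarith
  refine ⟨fun x => ⟨hVne x, hVc x, ?_⟩, hVm, fun x P hP => h3 x P hP.1, hKP1, ?_⟩
  · intro P hP Q hQ a b hab R hR
    refine ⟨(h1 x).2.2 P hP.1 Q hQ.1 a b hab R hR, fun T hT => ?_⟩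
    have e : intBCF F R = a * intBCF F P + b * intBCF F Q := by
      unfold intBCF
      rw [hR, integral_add_measure, integral_smul_nnreal_measure, integral_smul_nnreal_measure]
      · rfl
      · exact (F.integrable (P : Measure (IPath X))).smul_measure_nnreal
      · exact (F.integrable (Q : Measure (IPath X))).smul_measure_nnreal
    have hab' : (a : ℝ) + b = 1 := by exact_mod_cast hab
    have e1 := mul_le_mul_of_nonneg_left (hP.2 T hT) a.2
    have e2 := mul_le_mul_of_nonneg_left (hQ.2 T hT) b.2
    have e3 : intBCF F T = a * intBCF F T + b * intBCF F T := by rw [← add_mul, hab', one_mul]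
    rw [e, e3]
    exact add_le_add e1 e2
  · intro x P hP s hs
    apply Subset.antisymm
    · rintro _ ⟨Q, hQ, rfl⟩
      exact hQ.2.1
    · intro Q hQ
      have hQC : Q ∈ Kset C P s := by
        intro f
        refine (hQ f).trans (integral_mono (hSupp_int hVne hVc hVm s f P)
          (hSupp_int hne hc h2 s f P) fun w => ?_)
        exact hSupp_le (C := fun x => Vmax (intBCF F) (C x)) (hVne (w s)) f
          fun R hR => le_hSupp hR.1 f
      have hQ2 := hQ
      rw [← h5 x P hP.1 s hs] at hQC
      obtain ⟨Q', ⟨hQ'C, -, hQ'z⟩, rfl⟩ := hQC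
      refine ⟨Q', ⟨⟨hQ'C, fun T hT => ?_⟩, hQ2, hQ'z⟩, rfl⟩
      have e0 := hP.2 T hT
      have e1 := hsplit s P
      have e2 := hsplit s Q'
      have e4 := hQ'z n
      have e6 := h4 x P hP.1 s hs F
      have e7 := hQ (-F)
      have e8 : ∀ y, hSupp (fun x => Vmax (intBCF F) (C x)) y (-F) = - hSupp C y F := by
        intro y
        obtain ⟨R, hR, hRe⟩ := hSupp_attained (C := fun x => Vmax (intBCF F) (C x))
          (hVne y) (hVc y) (-F)
        rw [hRe, ← hV_eq hR]
        exact integral_neg _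
      have e9 : intBCF (-F) (pshift s Q') = - intBCF F (pshift s Q') := integral_neg _
      simp_rw [e8] at e7
      rw [e9, integral_neg] at e7
      have e10 : Real.exp (-lam n * s) * intBCF F (pshift s P) ≤
          Real.exp (-lam n * s) * intBCF F (pshift s Q') :=
        mul_le_mul_of_nonneg_left (by linarith) (Real.exp_pos _).le
      linarith
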